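/- Let f be a balanced dominating function on Grid_{m×n} with m, n ≥ 8, and set a_{i,j} = f(v_{i,j}). Then a_{3,3} = a_{2,2} and a_{4,4} = −a_{2,2}; moreover a_{1,1} + a_{2,2} ∈ {−1, 0, 1} and a_{1,1} = 0 implies a_{2,2} = 0. -/

import Mathlib

open Finset

open scoped Classical in
noncomputable def closedSum {V : Type*} [Fintype V] (G : SimpleGraph V) (f : V → ℤ) (v : V) : ℤ :=
  f v + ∑ u ∈ Finset.univ.filter (fun u => G.Adj v u), f u

def IsBDF {V : Type*} [Fintype V] (G : SimpleGraph V) (f : V → ℤ) : Prop :=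
  (∀ v, f v = -1 ∨ f v = 0 ∨ f v = 1) ∧ ∀ v, closedSum G f v = 0


/-- The grid graph on an m × n lattice: vertices (i,j), edges between horizontally
or vertically adjacent lattice points. -/
def gridGraph (m n : ℕ) : SimpleGraph (Fin m × Fin n) :=
  SimpleGraph.fromRel (fun p q =>
    (p.1 = q.1 ∧ (q.2 : ℕ) = (p.2 : ℕ) + 1) ∨
    (p.2 = q.2 ∧ (q.1 : ℕ) = (p.1 : ℕ) + 1))

/-- The value of `f` at the 1-indexed position `(i, j)`, extended by zero outside the grid. -/
noncomputable def padded {m n : ℕ} (f : Fin m × Fin n → ℤ) (i j : ℕ) : ℤ :=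
  ∑ u : Fin m × Fin n, if (u.1 : ℕ) + 1 = i ∧ (u.2 : ℕ) + 1 = j then f u else 0

theorem padded_apply {m n : ℕ} (f : Fin m × Fin n → ℤ) (i j : ℕ) (hi : i < m) (hj : j < n) :
    padded f (i + 1) (j + 1) = f (⟨i, hi⟩, ⟨j, hj⟩) := by
  unfold padded
  rw [Finset.sum_eq_single (⟨i, hi⟩, ⟨j, hj⟩)]
  · simp
  · rintro ⟨a, b⟩ _ hne
    rw [if_neg]
    rintro ⟨h1, h2⟩
    apply hne
    ext <;> simp at h1 h2 ⊢ <;> omega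
  · simp

theorem padded_zero_left {m n : ℕ} (f : Fin m × Fin n → ℤ) (j : ℕ) : padded f 0 j = 0 := by
  simp [padded]

theorem padded_zero_right {m n : ℕ} (f : Fin m × Fin n → ℤ) (i : ℕ) : padded f i 0 = 0 := by
  simp [padded]

theorem padded_eq {m n : ℕ} (f : Fin m × Fin n → ℤ) (hf : IsBDF (gridGraph m n) f)
    (i j : ℕ) (hi : i < m) (hj : j < n) :
    padded f (i + 1) (j + 1) + padded f i (j + 1) + padded f (i + 2) (j + 1)
      + padded f (i + 1) j + padded f (i + 1) (j + 2) = 0 := by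
  have h := hf.2 (⟨i, hi⟩, ⟨j, hj⟩)
  unfold closedSum at h
  rw [← padded_apply f i j hi hj, Finset.sum_filter] at h
  rw [← h]
  simp only [add_assoc]
  congr 1
  unfold padded
  simp only [← Finset.sum_add_distrib]
  refine Finset.sum_congr rfl ?_
  rintro ⟨⟨a, ha⟩, ⟨b, hb⟩⟩ _
  simp only [gridGraph, SimpleGraph.fromRel_adj, ne_eq, Prod.mk.injEq, Fin.mk.injEq]
  split_ifs <;> first | omega | simp

theorem padded_bound {m n : ℕ} (f : Fin m × Fin n → ℤ) (hf : IsBDF (gridGraph m n) f)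
    (i j : ℕ) (hi : i < m) (hj : j < n) :
    -1 ≤ padded f (i + 1) (j + 1) ∧ padded f (i + 1) (j + 1) ≤ 1 := by
  rw [padded_apply f i j hi hj]
  rcases hf.1 (⟨i, hi⟩, ⟨j, hj⟩) with h | h | h <;> omega

theorem triangle_relations (F : ℕ → ℕ → ℤ) (hl : ∀ j, F 0 j = 0) (hr : ∀ i, F i 0 = 0)
    (hb : ∀ i j, i < 8 → j < 8 → -1 ≤ F (i + 1) (j + 1) ∧ F (i + 1) (j + 1) ≤ 1)
    (he : ∀ i j, i < 8 → j < 8 →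
      F (i + 1) (j + 1) + F i (j + 1) + F (i + 2) (j + 1) + F (i + 1) j + F (i + 1) (j + 2) = 0) :
    F 3 3 = F 2 2 ∧ F 4 4 = -F 2 2 ∧
    (F 1 1 + F 2 2 = -1 ∨ F 1 1 + F 2 2 = 0 ∨ F 1 1 + F 2 2 = 1) ∧ (F 1 1 = 0 → F 2 2 = 0) := by
  have e11 := he 0 0 (by norm_num) (by norm_num)
  have e12 := he 0 1 (by norm_num) (by norm_num)
  have e13 := he 0 2 (by norm_num) (by norm_num)
  have e14 := he 0 3 (by norm_num) (by norm_num)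
  have e15 := he 0 4 (by norm_num) (by norm_num)
  have e16 := he 0 5 (by norm_num) (by norm_num)
  have e17 := he 0 6 (by norm_num) (by norm_num)
  have e21 := he 1 0 (by norm_num) (by norm_num)
  have e22 := he 1 1 (by norm_num) (by norm_num)
  have e23 := he 1 2 (by norm_num) (by norm_num)
  have e24 := he 1 3 (by norm_num) (by norm_num)
  have e25 := he 1 4 (by norm_num) (by norm_num)
  have e26 := he 1 5 (by norm_num) (by norm_num)
  have e31 := he 2 0 (by norm_num) (by norm_num)
  have e32 := he 2 1 (by norm_num) (by norm_num)
  have e33 := he 2 2 (by norm_num) (by norm_num)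
  have e34 := he 2 3 (by norm_num) (by norm_num)
  have e35 := he 2 4 (by norm_num) (by norm_num)
  have e41 := he 3 0 (by norm_num) (by norm_num)
  have e42 := he 3 1 (by norm_num) (by norm_num)
  have e43 := he 3 2 (by norm_num) (by norm_num)
  have e44 := he 3 3 (by norm_num) (by norm_num)
  have e51 := he 4 0 (by norm_num) (by norm_num)
  have e52 := he 4 1 (by norm_num) (by norm_num)
  have e53 := he 4 2 (by norm_num) (by norm_num)
  have e61 := he 5 0 (by norm_num) (by norm_num)
  have e62 := he 5 1 (by norm_num) (by norm_num)
  have e71 := he 6 0 (by norm_num) (by norm_num)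
  have b11 := hb 0 0 (by norm_num) (by norm_num)
  have b12 := hb 0 1 (by norm_num) (by norm_num)
  have b13 := hb 0 2 (by norm_num) (by norm_num)
  have b14 := hb 0 3 (by norm_num) (by norm_num)
  have b15 := hb 0 4 (by norm_num) (by norm_num)
  have b16 := hb 0 5 (by norm_num) (by norm_num)
  have b17 := hb 0 6 (by norm_num) (by norm_num)
  have b18 := hb 0 7 (by norm_num) (by norm_num)
  have b21 := hb 1 0 (by norm_num) (by norm_num)
  have b22 := hb 1 1 (by norm_num) (by norm_num)
  have b23 := hb 1 2 (by norm_num) (by norm_num)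
  have b24 := hb 1 3 (by norm_num) (by norm_num)
  have b25 := hb 1 4 (by norm_num) (by norm_num)
  have b26 := hb 1 5 (by norm_num) (by norm_num)
  have b27 := hb 1 6 (by norm_num) (by norm_num)
  have b31 := hb 2 0 (by norm_num) (by norm_num)
  have b32 := hb 2 1 (by norm_num) (by norm_num)
  have b33 := hb 2 2 (by norm_num) (by norm_num)
  have b34 := hb 2 3 (by norm_num) (by norm_num)
  have b35 := hb 2 4 (by norm_num) (by norm_num)
  have b36 := hb 2 5 (by norm_num) (by norm_num)
  have b41 := hb 3 0 (by norm_num) (by norm_num)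
  have b42 := hb 3 1 (by norm_num) (by norm_num)
  have b43 := hb 3 2 (by norm_num) (by norm_num)
  have b44 := hb 3 3 (by norm_num) (by norm_num)
  have b45 := hb 3 4 (by norm_num) (by norm_num)
  have b51 := hb 4 0 (by norm_num) (by norm_num)
  have b52 := hb 4 1 (by norm_num) (by norm_num)
  have b53 := hb 4 2 (by norm_num) (by norm_num)
  have b54 := hb 4 3 (by norm_num) (by norm_num)
  have b61 := hb 5 0 (by norm_num) (by norm_num)
  have b62 := hb 5 1 (by norm_num) (by norm_num)
  have b63 := hb 5 2 (by norm_num) (by norm_num)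
  have b71 := hb 6 0 (by norm_num) (by norm_num)
  have b72 := hb 6 1 (by norm_num) (by norm_num)
  have b81 := hb 7 0 (by norm_num) (by norm_num)
  simp only [hl, hr, Nat.reduceAdd, zero_add, add_zero] at e11 e12 e13 e14 e15 e16 e17 e21 e22 e23 e24 e25 e26 e31 e32 e33 e34 e35 e41 e42 e43 e44 e51 e52 e53 e61 e62 e71 b11 b12 b13 b14 b15 b16 b17 b18 b21 b22 b23 b24 b25 b26 b27 b31 b32 b33 b34 b35 b36 b41 b42 b43 b44 b45 b51 b52 b53 b54 b61 b62 b63 b71 b72 b81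
  clear he hb hl hr
  have s12 : F 1 2 + F 2 1 = (-1) * F 1 1 + (0) * F 2 2 + (0) * F 3 3 + (0) * F 4 4 := by
    linear_combination e11
  have s13 : F 1 3 + F 3 1 = (-1) * F 1 1 + (-2) * F 2 2 + (0) * F 3 3 + (0) * F 4 4 := by
    linear_combination e12 + e21 - s12
  have s23 : F 2 3 + F 3 2 = (1) * F 1 1 + (-1) * F 2 2 + (0) * F 3 3 + (0) * F 4 4 := by
    linear_combination e22 - s12
  have s14 : F 1 4 + F 4 1 = (1) * F 1 1 + (3) * F 2 2 + (0) * F 3 3 + (0) * F 4 4 := by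
    linear_combination e13 + e31 - s13 - s12 - s23
  have s24 : F 2 4 + F 4 2 = (0) * F 1 1 + (1) * F 2 2 + (-2) * F 3 3 + (0) * F 4 4 := by
    linear_combination e23 + e32 - s23 - s13
  have s15 : F 1 5 + F 5 1 = (0) * F 1 1 + (-2) * F 2 2 + (2) * F 3 3 + (0) * F 4 4 := by
    linear_combination e14 + e41 - s14 - s13 - s24
  have s34 : F 3 4 + F 4 3 = (-1) * F 1 1 + (1) * F 2 2 + (-1) * F 3 3 + (0) * F 4 4 := by
    linear_combination e33 - s23
  have s25 : F 2 5 + F 5 2 = (-1) * F 1 1 + (-4) * F 2 2 + (3) * F 3 3 + (0) * F 4 4 := by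
    linear_combination e24 + e42 - s24 - s14 - s23 - s34
  have s16 : F 1 6 + F 6 1 = (0) * F 1 1 + (3) * F 2 2 + (-5) * F 3 3 + (0) * F 4 4 := by
    linear_combination e15 + e51 - s15 - s14 - s25
  have s35 : F 3 5 + F 5 3 = (1) * F 1 1 + (-2) * F 2 2 + (1) * F 3 3 + (-2) * F 4 4 := by
    linear_combination e34 + e43 - s34 - s24
  have s26 : F 2 6 + F 6 2 = (0) * F 1 1 + (7) * F 2 2 + (-4) * F 3 3 + (2) * F 4 4 := by
    linear_combination e25 + e52 - s25 - s15 - s24 - s35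
  have s17 : F 1 7 + F 7 1 = (0) * F 1 1 + (-8) * F 2 2 + (7) * F 3 3 + (-2) * F 4 4 := by
    linear_combination e16 + e61 - s16 - s15 - s26
  have s45 : F 4 5 + F 5 4 = (1) * F 1 1 + (-1) * F 2 2 + (1) * F 3 3 + (-1) * F 4 4 := by
    linear_combination e44 - s34
  have s36 : F 3 6 + F 6 3 = (0) * F 1 1 + (6) * F 2 2 + (-4) * F 3 3 + (3) * F 4 4 := by
    linear_combination e35 + e53 - s35 - s25 - s34 - s45
  have s27 : F 2 7 + F 7 2 = (1) * F 1 1 + (-12) * F 2 2 + (10) * F 3 3 + (-5) * F 4 4 := by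
    linear_combination e26 + e62 - s26 - s16 - s25 - s36
  have s18 : F 1 8 + F 8 1 = (-1) * F 1 1 + (17) * F 2 2 + (-12) * F 3 3 + (7) * F 4 4 := by
    linear_combination e17 + e71 - s17 - s16 - s27
  clear s12 s13 s23 s24 s15 s34 s25 s35 s26 s17 s45 s36 s27 e11 e12 e13 e14 e15 e16 e17 e21 e22 e23 e24 e25 e26 e31 e32 e33 e34 e35 e41 e42 e43 e44 e51 e52 e53 e61 e62 e71 b12 b13 b15 b17 b21 b23 b24 b25 b26 b27 b31 b32 b34 b35 b36 b42 b43 b45 b51 b52 b53 b54 b62 b63 b71 b72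
  have h33 : F 3 3 = F 2 2 := by
    clear s14 s18
    omega
  have h44 : F 4 4 = -F 2 2 := by
    clear s14 s16
    omega
  clear s16 s18
  refine ⟨h33, h44, ?_, ?_⟩
  · omega
  · intro h
    omega

/-- For a BDF on Grid_{m×n} with m, n ≥ 8 (entries a_{i,j}, 1-indexed):
a_{3,3} = a_{2,2}, a_{4,4} = -a_{2,2}, a_{1,1} + a_{2,2} ∈ {-1,0,1}, and
a_{1,1} = 0 implies a_{2,2} = 0. -/
theorem grid_bdf_diagonal_relations (m n : ℕ) (hm : 8 ≤ m) (hn : 8 ≤ n)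
    (f : Fin m × Fin n → ℤ) (hf : IsBDF (gridGraph m n) f) :
    f (⟨2, by omega⟩, ⟨2, by omega⟩) = f (⟨1, by omega⟩, ⟨1, by omega⟩) ∧
    f (⟨3, by omega⟩, ⟨3, by omega⟩) = -f (⟨1, by omega⟩, ⟨1, by omega⟩) ∧
    (f (⟨0, by omega⟩, ⟨0, by omega⟩) + f (⟨1, by omega⟩, ⟨1, by omega⟩) = -1 ∨
     f (⟨0, by omega⟩, ⟨0, by omega⟩) + f (⟨1, by omega⟩, ⟨1, by omega⟩) = 0 ∨
     f (⟨0, by omega⟩, ⟨0, by omega⟩) + f (⟨1, by omega⟩, ⟨1, by omega⟩) = 1) ∧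
    (f (⟨0, by omega⟩, ⟨0, by omega⟩) = 0 → f (⟨1, by omega⟩, ⟨1, by omega⟩) = 0) := by
  have h := triangle_relations (padded f) (padded_zero_left f) (padded_zero_right f)
    (fun i j hi hj => padded_bound f hf i j (by omega) (by omega))
    (fun i j hi hj => padded_eq f hf i j (by omega) (by omega))
  rw [padded_apply f 0 0 (by omega) (by omega), padded_apply f 1 1 (by omega) (by omega),
    padded_apply f 2 2 (by omega) (by omega), padded_apply f 3 3 (by omega) (by omega)] at h
  exact h
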